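/- Let ν ∈ (0,1/10), h ∈ (0,1/100), and assume 𝐘 ⊂ B(0,h^{-1}) ⊂ ℝ² is ν-porous on lines on scales 1 to h^{-1}. Then there exist constants C_reg, C_gr ≥ 0 and α ∈ (0,1) depending only on ν, and smooth compactly supported functions ω_k : ℝ² → (−∞,0] for k ≥ 1, such that: ω_k = 0 for all sufficiently large k; supp ω_k ⊂ {2^{k−1} ≤ |x| ≤ 2^{k+1}}; ‖ω_k‖_{S¹₃} ≤ C_reg; Σ_{k≥1} q_k ≤ C_gr, where q_k := −inf_{θ∈S¹} T(|x|^{−2}ω_k)(0,θ); and the sum ω = Σ_{k≥1} ω_k satisfies ω(x) ≤ −|x|/(log|x|)^α for all x ∈ 𝐘 with |x| > 10. -/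

import Mathlib

open MeasureTheory Real

noncomputable section

/-- Directional derivative of a function on `ℝ²` in the direction `v`. -/
def pd (v : ℝ × ℝ) (ψ : ℝ × ℝ → ℝ) : ℝ × ℝ → ℝ := fun p => fderiv ℝ ψ p v

/-- The X-ray transform `Tψ(s,θ)`. -/
def xray (ψ : ℝ × ℝ → ℝ) (s θ : ℝ) : ℝ :=
  ∫ t : ℝ, ψ (t * Real.cos θ - s * Real.sin θ, t * Real.sin θ + s * Real.cos θ)

/-- The function `x ↦ |x|⁻² ψ(x)` on `ℝ²`. -/
def invSq (ψ : ℝ × ℝ → ℝ) : ℝ × ℝ → ℝ := fun p => (p.1 ^ 2 + p.2 ^ 2)⁻¹ * ψ p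

/-- `q(ψ) := −inf_{θ ∈ S¹} T(|x|⁻²ψ)(0,θ)`. -/
def qOf (ψ : ℝ × ℝ → ℝ) : ℝ := -(⨅ θ : ℝ, xray (invSq ψ) 0 θ)

/-- The Kohn–Nirenberg norm `‖ψ‖_{S¹₃}` is at most `C`. -/
def KNle (ψ : ℝ × ℝ → ℝ) (C : ℝ) : Prop :=
  ∀ γ₁ γ₂ : ℕ, γ₁ + γ₂ ≤ 3 → ∀ p : ℝ × ℝ,
    |Real.sqrt (1 + p.1 ^ 2 + p.2 ^ 2) ^ ((γ₁ + γ₂ : ℤ) - 1) *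
      (pd (1, 0))^[γ₁] ((pd (0, 1))^[γ₂] ψ) p| ≤ C

/-- The dyadic annulus `{2^{k−1} ≤ |x| ≤ 2^{k+1}}` in `ℝ²`. -/
def annulus (k : ℕ) : Set (ℝ × ℝ) :=
  {p | (2 : ℝ) ^ ((k : ℤ) - 1) ≤ Real.sqrt (p.1 ^ 2 + p.2 ^ 2) ∧
       Real.sqrt (p.1 ^ 2 + p.2 ^ 2) ≤ 2 ^ (k + 1)}

/-- The Euclidean norm on `ℝ × ℝ`. -/
def enorm2 (p : ℝ × ℝ) : ℝ := Real.sqrt (p.1 ^ 2 + p.2 ^ 2)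

/-- The open Euclidean ball in `ℝ × ℝ`. -/
def eball2 (c : ℝ × ℝ) (r : ℝ) : Set (ℝ × ℝ) := {p | enorm2 (p.1 - c.1, p.2 - c.2) < r}

/-- `Y ⊆ ℝ²` is `ν`-porous on lines on scales `ρ₀` to `ρ₁`: every line segment of
(Euclidean) length `R ∈ [ρ₀, ρ₁]` contains a point `x` with `Y ∩ B(x, νR) = ∅`. -/
def LinePorous2 (ν ρ₀ ρ₁ : ℝ) (Y : Set (ℝ × ℝ)) : Prop :=
  ∀ a b : ℝ × ℝ, enorm2 (a.1 - b.1, a.2 - b.2) ∈ Set.Icc ρ₀ ρ₁ →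
    ∃ x ∈ segment ℝ a b, Y ∩ eball2 x (ν * enorm2 (a.1 - b.1, a.2 - b.2)) = ∅

/-!
Write `K = 2 ^ k`. The piece `ω k` is `-6 K κ ^ 3` times a smooth cutoff, at scale `K κ / 8`, of the
part of `Y` in the shell `|x| ∼ K`, with `κ = k ^ (-(α / 3))`. Three derivatives cost a factor
`(K κ) ^ (-3)`, which `κ ^ 3` absorbs, so the symbol norm is bounded uniformly in `k`. On a line
through the origin the support of `ω k` lies in a neighbourhood of `Y` of width `K κ / 4`. This
neighbourhood is porous on scales from `O(K κ)` to `K / 2`; removing one piece out of `b` at each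
`b`-adic scale shows that it meets the line in length `O(κ ^ γ K)`. Hence `q_k = O(κ ^ (3 + γ))`,
which is summable as soon as `α (1 + γ / 3) > 1`, and this leaves room for `α < 1`. On `Y` the
weight is at most `-6 K k ^ (-α)`, which is at most `-|x| / (log |x|) ^ α` because `k` is comparable
to `log |x|`.
-/

section

open Set Metric Function Convolution Pointwise

section Porosity

/-- `Z ⊆ ℝ` is `ν`-porous on scales `ρ₀` to `ρ₁`. This is the one-dimensional case of porosity on
lines, a segment of length `R` being recorded by its left endpoint. -/
def IsPorous (ν ρ₀ ρ₁ : ℝ) (Z : Set ℝ) : Prop :=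
  ∀ a, ∀ R ∈ Icc ρ₀ ρ₁, ∃ x ∈ Icc a (a + R), Disjoint Z (ball x (ν * R))

lemma Icc_subset_biUnion_Icc {X : Type*} [LinearOrder X] (N : ℕ) (a : ℕ → X) :
    Icc (a 0) (a (N + 1)) ⊆ ⋃ i ∈ Finset.range (N + 1), Icc (a i) (a (i + 1)) := by
  induction N with
  | zero => simp
  | succ N ih =>
    calc Icc (a 0) (a (N + 2))
        ⊆ Icc (a 0) (a (N + 1)) ∪ Icc (a (N + 1)) (a (N + 2)) := Icc_subset_Icc_union_Icc
      _ ⊆ _ := by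
        rw [Finset.range_add_one, Finset.set_biUnion_insert, union_comm]
        exact union_subset_union_right _ ih

lemma Icc_subset_biUnion_Icc_add_mul (a l : ℝ) (N : ℕ) :
    Icc a (a + (N + 1) * l) ⊆
      ⋃ i ∈ Finset.range (N + 1), Icc (a + i * l) (a + i * l + l) := by
  simpa [add_mul, add_assoc] using Icc_subset_biUnion_Icc N fun i : ℕ => a + i * l

lemma volume_inter_Icc_le_mul {Z : Set ℝ} {l : ℝ} {c : ENNReal}
    (hZ : ∀ b, volume (Z ∩ Icc b (b + l)) ≤ c) (a : ℝ) (N : ℕ) :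
    volume (Z ∩ Icc a (a + (N + 1) * l)) ≤ (N + 1) * c :=
  calc volume (Z ∩ Icc a (a + (N + 1) * l))
      ≤ volume (⋃ i ∈ Finset.range (N + 1), Z ∩ Icc (a + i * l) (a + i * l + l)) := by
        rw [← inter_iUnion₂]
        gcongr
        exact Icc_subset_biUnion_Icc_add_mul a l N
    _ ≤ ∑ i ∈ Finset.range (N + 1), volume (Z ∩ Icc (a + i * l) (a + i * l + l)) :=
        measure_biUnion_finset_le _ _
    _ ≤ ∑ _i ∈ Finset.range (N + 1), c := Finset.sum_le_sum fun i _ => hZ _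
    _ = (N + 1) * c := by simp

lemma volume_inter_Icc_le_mul_of_disjoint {Z : Set ℝ} {l r a x : ℝ} {c : ENNReal} {N : ℕ}
    (hZ : ∀ b, volume (Z ∩ Icc b (b + l)) ≤ c) (hx : x ∈ Icc a (a + (N + 1) * l))
    (hlr : l < r) (hxZ : Disjoint Z (ball x r)) :
    volume (Z ∩ Icc a (a + (N + 1) * l)) ≤ N * c := by
  obtain ⟨j, hj, hxj⟩ := mem_iUnion₂.1 (Icc_subset_biUnion_Icc_add_mul a l N hx)
  have hcover : Z ∩ Icc a (a + (N + 1) * l) ⊆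
      ⋃ i ∈ (Finset.range (N + 1)).erase j, Z ∩ Icc (a + i * l) (a + i * l + l) := by
    rintro y ⟨hyZ, hy⟩
    obtain ⟨i, hi, hyi⟩ := mem_iUnion₂.1 (Icc_subset_biUnion_Icc_add_mul a l N hy)
    refine mem_biUnion (Finset.mem_erase.2 ⟨?_, hi⟩) ⟨hyZ, hyi⟩
    rintro rfl
    have hyx : dist y x ≤ l := by simpa using Real.dist_le_of_mem_Icc hyi hxj
    exact disjoint_left.1 hxZ hyZ (hyx.trans_lt hlr)
  calc volume (Z ∩ Icc a (a + (N + 1) * l))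
      ≤ ∑ i ∈ (Finset.range (N + 1)).erase j, volume (Z ∩ Icc (a + i * l) (a + i * l + l)) :=
        (measure_mono hcover).trans (measure_biUnion_finset_le _ _)
    _ ≤ ∑ _i ∈ (Finset.range (N + 1)).erase j, c := Finset.sum_le_sum fun i _ => hZ _
    _ = N * c := by simp [Finset.card_erase_of_mem hj]

lemma IsPorous.volume_inter_Icc_le_pow {ν ρ₀ ρ₁ l : ℝ} {Z : Set ℝ} (hZ : IsPorous ν ρ₀ ρ₁ Z)
    {m : ℕ} (hm : 1 < ν * (m + 1)) (hl : 0 < l) (hρ₀ : ρ₀ ≤ l * (m + 1)) (n : ℕ)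
    (hn : l * (m + 1) ^ n ≤ ρ₁) (a : ℝ) :
    volume (Z ∩ Icc a (a + l * (m + 1) ^ n)) ≤ m ^ n * ENNReal.ofReal l := by
  induction n generalizing a with
  | zero => exact (measure_mono inter_subset_right).trans_eq (by simp)
  | succ n ih =>
    have hpow : (1 : ℝ) ≤ (m + 1) ^ n := one_le_pow₀ (by simp)
    set l' := l * (m + 1) ^ n
    have hl' : l ≤ l' := le_mul_of_one_le_right hl.le hpow
    have hsucc : l * (m + 1) ^ (n + 1) = (m + 1) * l' := by ring
    rw [hsucc] at hn ⊢
    obtain ⟨x, hx, hxZ⟩ := hZ a ((m + 1) * l') ⟨by nlinarith, hn⟩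
    have hball : l' < ν * ((m + 1) * l') := by nlinarith
    refine (volume_inter_Icc_le_mul_of_disjoint (ih ?_) hx hball hxZ).trans_eq ?_
    · nlinarith
    · rw [pow_succ', mul_assoc]

lemma IsPorous.exists_volume_inter_Icc_le_pow {ν ρ₀ ρ₁ R : ℝ} {Z : Set ℝ}
    (hZ : IsPorous ν ρ₀ ρ₁ Z) {m : ℕ} (hm0 : 0 < m) (hm : 1 < ν * (m + 1)) (hρ₀ : 0 < ρ₀)
    (hRρ₁ : R ≤ ρ₁) (a : ℝ) :
    ∃ n : ℕ, R / ρ₀ ≤ (m + 1) ^ (n + 1) ∧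
      volume (Z ∩ Icc a (a + R)) ≤ ENNReal.ofReal ((m / (m + 1)) ^ n * R) := by
  have hb : (1 : ℝ) < m + 1 := by exact_mod_cast Nat.lt_add_of_pos_left hm0
  rcases lt_or_ge R ρ₀ with hlt | hge
  · refine ⟨0, ?_, (measure_mono inter_subset_right).trans_eq (by simp)⟩
    have hle : R / ρ₀ ≤ 1 := (div_le_one hρ₀).2 hlt.le
    simpa using hle.trans hb.le
  · obtain ⟨n, hn, hn'⟩ := exists_nat_pow_near ((one_le_div hρ₀).2 hge) hb
    refine ⟨n, hn'.le, ?_⟩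
    have hbn : (0 : ℝ) < (m + 1) ^ n := by positivity
    have hl : R / (m + 1) ^ n * (m + 1) ^ n = R := div_mul_cancel₀ _ hbn.ne'
    have hρl : ρ₀ ≤ R / (m + 1) ^ n := (le_div_comm₀ hρ₀ hbn).2 hn
    have hvol := hZ.volume_inter_Icc_le_pow hm (hρ₀.trans_le hρl) (by nlinarith) n
      (hl.trans_le hRρ₁) a
    rw [hl] at hvol
    refine hvol.trans_eq ?_
    rw [← ENNReal.ofReal_natCast, ← ENNReal.ofReal_pow (by positivity),
      ← ENNReal.ofReal_mul (by positivity), div_pow, mul_div_left_comm, mul_comm]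

lemma exists_volume_inter_Icc_le_rpow_of_isPorous {ν : ℝ} (hν : 0 < ν) :
    ∃ γ > (0 : ℝ), ∃ C ≥ (0 : ℝ), ∀ {ρ₀ ρ₁ R : ℝ} {Z : Set ℝ}, IsPorous ν ρ₀ ρ₁ Z →
      0 < ρ₀ → 0 < R → R ≤ ρ₁ →
      ∀ a, volume (Z ∩ Icc a (a + R)) ≤ ENNReal.ofReal (C * (ρ₀ / R) ^ γ * R) := by
  obtain ⟨m, hm⟩ := exists_nat_gt (max 0 ν⁻¹)
  obtain ⟨hm0, hmν⟩ := max_lt_iff.1 hm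
  set b : ℝ := m + 1
  have hb : 1 < b := by simpa [b] using hm0
  have hνb : 1 < ν * b := by
    rw [← inv_lt_iff_one_lt_mul₀' hν]
    exact hmν.trans (lt_add_one _)
  -- The exponent for which one scale, of ratio `b`, accounts for the loss of one piece out of `b`.
  set γ := logb b (b / m)
  have hγ : 0 < γ := logb_pos hb ((one_lt_div hm0).2 (lt_add_one _))
  refine ⟨γ, hγ, b ^ γ, by positivity, fun {ρ₀ ρ₁ R Z} hZ hρ₀ hR hRρ₁ a => ?_⟩
  obtain ⟨n, hn, hvol⟩ :=
    hZ.exists_volume_inter_Icc_le_pow (by exact_mod_cast hm0) hνb hρ₀ hRρ₁ a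
  have hratio : (m / b) ^ n = (b ^ n)⁻¹ ^ γ := by
    rw [← rpow_natCast b n, ← rpow_neg (by positivity), ← rpow_mul (by positivity), mul_comm,
      rpow_mul (by positivity), rpow_logb (by positivity) hb.ne' (by positivity),
      rpow_neg (by positivity), rpow_natCast, ← inv_pow, inv_div]
  have hscale : (b ^ n)⁻¹ ≤ b * (ρ₀ / R) := by
    rw [inv_le_iff_one_le_mul₀ (by positivity), mul_right_comm, ← pow_succ', ← inv_div R,
      ← div_eq_mul_inv, one_le_div (by positivity)]
    exact hn
  refine hvol.trans (ENNReal.ofReal_le_ofReal ?_)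
  rw [hratio, ← mul_rpow (by positivity) (by positivity)]
  gcongr

end Porosity

section Convolution

lemma comp_convolution_lsmul {E F G : Type*} [AddGroup E] [MeasurableSpace E] {μ : Measure E}
    [NormedAddCommGroup F] [NormedSpace ℝ F] [NormedAddCommGroup G] [NormedSpace ℝ G]
    (L : F ≃L[ℝ] G) (f : E → ℝ) (g : E → F) :
    L ∘ (f ⋆[ContinuousLinearMap.lsmul ℝ ℝ, μ] g) =
      f ⋆[ContinuousLinearMap.lsmul ℝ ℝ, μ] (L ∘ g) := by
  ext x
  simp [convolution_lsmul, ← L.integral_comp_comm]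

lemma norm_convolution_lsmul_le {E F : Type*} [AddGroup E] [MeasurableSpace E] [MeasurableAdd E]
    [MeasurableNeg E] {μ : Measure E} [μ.IsAddLeftInvariant]
    [μ.IsNegInvariant] [NormedAddCommGroup F] [NormedSpace ℝ F] {f : E → ℝ} {g : E → F}
    (hf : ∀ x, |f x| ≤ 1) (hg : Integrable g μ) (x : E) :
    ‖(f ⋆[ContinuousLinearMap.lsmul ℝ ℝ, μ] g) x‖ ≤ ∫ y, ‖g y‖ ∂μ := by
  rw [convolution_lsmul, ← integral_sub_left_eq_self (fun y => ‖g y‖) μ x]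
  refine norm_integral_le_of_norm_le (hg.norm.comp_sub_left x) (.of_forall fun t => ?_)
  rw [norm_smul]
  exact mul_le_of_le_one_left (norm_nonneg _) (hf t)

variable {E F : Type*} [NormedAddCommGroup E] [NormedSpace ℝ E] [MeasurableSpace E] [BorelSpace E]
  {μ : Measure E} [SFinite μ] [μ.IsAddLeftInvariant] [NormedAddCommGroup F] [NormedSpace ℝ F]
  {f : E → ℝ} {g : E → F}

lemma fderiv_convolution_lsmul (hf : LocallyIntegrable f μ) (hcg : HasCompactSupport g)
    (hg : ContDiff ℝ 1 g) :
    fderiv ℝ (f ⋆[ContinuousLinearMap.lsmul ℝ ℝ, μ] g) =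
      f ⋆[ContinuousLinearMap.lsmul ℝ ℝ, μ] fderiv ℝ g := by
  have hprecompR : (ContinuousLinearMap.lsmul ℝ ℝ : ℝ →L[ℝ] F →L[ℝ] F).precompR E =
      ContinuousLinearMap.lsmul ℝ ℝ := by
    ext; simp
  ext1 x
  have hderiv := hcg.hasFDerivAt_convolution_right (ContinuousLinearMap.lsmul ℝ ℝ) hf hg x
  rw [hprecompR] at hderiv
  exact hderiv.fderiv

lemma iteratedFDeriv_convolution_lsmul (hf : LocallyIntegrable f μ) (hcg : HasCompactSupport g)
    {n : ℕ} (hg : ContDiff ℝ n g) :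
    iteratedFDeriv ℝ n (f ⋆[ContinuousLinearMap.lsmul ℝ ℝ, μ] g) =
      f ⋆[ContinuousLinearMap.lsmul ℝ ℝ, μ] iteratedFDeriv ℝ n g := by
  induction n with
  | zero =>
    exact comp_convolution_lsmul
      (continuousMultilinearCurryFin0 ℝ E F).symm.toContinuousLinearEquiv f g
  | succ n ih =>
    have hn : ContDiff ℝ 1 (iteratedFDeriv ℝ n g) :=
      hg.iteratedFDeriv_right (by push_cast; rw [add_comm])
    rw [iteratedFDeriv_succ_eq_comp_left, ih (hg.of_le (by simp)),
      fderiv_convolution_lsmul hf (hcg.iteratedFDeriv n) hn]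
    exact comp_convolution_lsmul (continuousMultilinearCurryLeftEquiv ℝ
      (fun _ : Fin (n + 1) => E) F).symm.toContinuousLinearEquiv f (fderiv ℝ (iteratedFDeriv ℝ n g))

end Convolution

section Cutoff

open scoped ContDiff

variable {E : Type*} [NormedAddCommGroup E] [NormedSpace ℝ E]

/-- `η` is a smooth cutoff of the set `S` at scale `r`: it equals `1` on `S`, vanishes outside the
`r`-neighbourhood of `S`, and its derivatives of order `i` are at most `C i * r⁻¹ ^ i`. -/
structure IsSmoothCutoff (C : ℕ → ℝ) (S : Set E) (r : ℝ) (η : E → ℝ) : Prop where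
  contDiff : ContDiff ℝ ∞ η
  nonneg : ∀ x, 0 ≤ η x
  le_one : ∀ x, η x ≤ 1
  eq_one : ∀ x ∈ S, η x = 1
  support_subset : support η ⊆ thickening r S
  norm_iteratedFDeriv_le : ∀ i x, ‖iteratedFDeriv ℝ i η x‖ ≤ C i * r⁻¹ ^ i

lemma IsSmoothCutoff.eq_zero {C : ℕ → ℝ} {r : ℝ} {η : E → ℝ} (hη : IsSmoothCutoff C ∅ r η) :
    η = 0 :=
  support_eq_empty_iff.1 (subset_empty_iff.1 (by simpa using hη.support_subset))

lemma IsSmoothCutoff.of_inv_smul {C : ℕ → ℝ} {S : Set E} {r : ℝ} {u : E → ℝ} (hr : 0 < r)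
    (hu : IsSmoothCutoff C ((r⁻¹ • ·) '' S) 1 u) : IsSmoothCutoff C S r fun x => u (r⁻¹ • x) where
  contDiff := hu.contDiff.comp (contDiff_const_smul _)
  nonneg x := hu.nonneg _
  le_one x := hu.le_one _
  eq_one x hx := hu.eq_one _ (mem_image_of_mem _ hx)
  support_subset x hx := by
    obtain ⟨-, ⟨y, hy, rfl⟩, hxy⟩ := mem_thickening_iff.1 (hu.support_subset hx)
    rw [dist_smul₀, norm_inv, Real.norm_of_nonneg hr.le, inv_mul_lt_iff₀ hr, mul_one] at hxy
    exact mem_thickening_iff.2 ⟨y, hy, hxy⟩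
  norm_iteratedFDeriv_le i x := by
    have hi : ContDiff ℝ i u := hu.contDiff.of_le (by exact_mod_cast le_top)
    rw [iteratedFDeriv_comp_const_smul _ hi, norm_smul, norm_pow, norm_inv,
      Real.norm_of_nonneg hr.le, mul_comm]
    gcongr
    simpa using hu.norm_iteratedFDeriv_le i (r⁻¹ • x)

lemma isSmoothCutoff_convolution [FiniteDimensional ℝ E] [MeasurableSpace E] [BorelSpace E]
    (μ : Measure E) [μ.IsAddHaarMeasure] (φ : ContDiffBump (0 : E)) (hφ : φ.rOut = 1 / 2)
    (S : Set E) :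
    IsSmoothCutoff (fun i => ∫ x, ‖iteratedFDeriv ℝ i (φ.normed μ) x‖ ∂μ) S 1
      ((thickening (1 / 2) S).indicator 1 ⋆[ContinuousLinearMap.lsmul ℝ ℝ, μ] φ.normed μ) := by
  set χ : E → ℝ := (thickening (1 / 2) S).indicator 1
  have hχ : LocallyIntegrable χ μ :=
    (locallyIntegrable_const (1 : ℝ)).indicator isOpen_thickening.measurableSet
  have hχ0 (x : E) : 0 ≤ χ x := indicator_nonneg (fun _ _ => zero_le_one) x
  have hχ1 (x : E) : |χ x| ≤ 1 := by
    rw [abs_of_nonneg (hχ0 x)]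
    exact indicator_le_self' (fun _ _ => zero_le_one) x
  refine ⟨φ.hasCompactSupport_normed.contDiff_convolution_right _ hχ φ.contDiff_normed,
    fun x => integral_nonneg fun t => mul_nonneg (hχ0 t) (φ.nonneg_normed _), fun x => ?_,
    fun x hx => ?_, ?_, fun i x => ?_⟩
  · have hle := norm_convolution_lsmul_le hχ1 (φ.integrable_normed (μ := μ)) x
    simp_rw [Real.norm_of_nonneg (φ.nonneg_normed _), φ.integral_normed] at hle
    exact (le_abs_self _).trans hle
  · have hball (y : E) (hy : y ∈ ball x φ.rOut) : χ y = 1 :=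
      indicator_of_mem (mem_thickening_iff.2 ⟨x, hx, hφ ▸ mem_ball.1 hy⟩) _
    have hx1 : χ x = 1 := hball x (mem_ball_self φ.rOut_pos)
    have hconv := φ.normed_convolution_eq_right (μ := μ) fun y hy => (hball y hy).trans hx1.symm
    rw [← hx1, ← hconv, convolution_lsmul_swap, convolution_lsmul]
    simp_rw [smul_eq_mul, mul_comm]
  · calc support (χ ⋆[ContinuousLinearMap.lsmul ℝ ℝ, μ] φ.normed μ)
        ⊆ thickening (1 / 2) S + ball (0 : E) (1 / 2) := by
          rw [← hφ, ← φ.support_normed_eq (μ := μ), hφ]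
          exact (support_convolution_subset _).trans (add_subset_add_right support_indicator_subset)
      _ ⊆ thickening 1 S := by
        rw [add_ball_zero]
        exact (thickening_thickening_subset _ _ _).trans_eq (by norm_num)
  · have hi : ContDiff ℝ i (φ.normed μ) := φ.contDiff_normed
    rw [iteratedFDeriv_convolution_lsmul hχ φ.hasCompactSupport_normed hi]
    simpa using norm_convolution_lsmul_le hχ1 ((hi.continuous_iteratedFDeriv'
      ).integrable_of_hasCompactSupport (φ.hasCompactSupport_normed.iteratedFDeriv i)) x

variable (E) in
lemma exists_isSmoothCutoff [FiniteDimensional ℝ E] :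
    ∃ C : ℕ → ℝ, (∀ i, 0 ≤ C i) ∧
      ∀ (S : Set E) (r : ℝ), 0 < r → ∃ η : E → ℝ, IsSmoothCutoff C S r η := by
  borelize E
  let φ : ContDiffBump (0 : E) := ⟨1 / 4, 1 / 2, by norm_num, by norm_num⟩
  exact ⟨_, fun i => integral_nonneg fun x => norm_nonneg _, fun S r hr =>
    ⟨_, (isSmoothCutoff_convolution Measure.addHaar φ rfl ((r⁻¹ • ·) '' S)).of_inv_smul hr⟩⟩

end Cutoff

section Symbols

open scoped ContDiff

variable {ψ : ℝ × ℝ → ℝ}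

lemma contDiff_pd (hψ : ContDiff ℝ ∞ ψ) (v : ℝ × ℝ) : ContDiff ℝ ∞ (pd v ψ) :=
  (hψ.fderiv_right (by simp)).clm_apply contDiff_const

lemma contDiff_iterate_pd (hψ : ContDiff ℝ ∞ ψ) (v : ℝ × ℝ) (m : ℕ) :
    ContDiff ℝ ∞ ((pd v)^[m] ψ) :=
  Iterate.rec (fun φ => ContDiff ℝ ∞ φ) hψ (fun _ h => contDiff_pd h v) m

lemma norm_iteratedFDeriv_pd_le (hψ : ContDiff ℝ ∞ ψ) (v : ℝ × ℝ) (n : ℕ) (p : ℝ × ℝ) :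
    ‖iteratedFDeriv ℝ n (pd v ψ) p‖ ≤ ‖v‖ * ‖iteratedFDeriv ℝ (n + 1) ψ p‖ := by
  rw [← norm_iteratedFDeriv_fderiv]
  exact norm_iteratedFDeriv_clm_apply_const (N := ∞)
    (hψ.fderiv_right (by simp)).contDiffAt (by exact_mod_cast le_top)

lemma norm_iteratedFDeriv_iterate_pd_le (hψ : ContDiff ℝ ∞ ψ) (v : ℝ × ℝ) (n m : ℕ) (p : ℝ × ℝ) :
    ‖iteratedFDeriv ℝ n ((pd v)^[m] ψ) p‖ ≤ ‖v‖ ^ m * ‖iteratedFDeriv ℝ (n + m) ψ p‖ := by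
  induction m generalizing n with
  | zero => simp
  | succ m ih =>
    rw [iterate_succ_apply', pow_succ', mul_assoc, add_comm m, ← add_assoc]
    refine (norm_iteratedFDeriv_pd_le (contDiff_iterate_pd hψ v m) v n p).trans ?_
    gcongr
    exact ih (n + 1)

lemma kNle_of_norm_iteratedFDeriv_le {C : ℝ} (hψ : ContDiff ℝ ∞ ψ)
    (hC : ∀ i : ℕ, i ≤ 3 → ∀ p : ℝ × ℝ,
      √(1 + p.1 ^ 2 + p.2 ^ 2) ^ ((i : ℤ) - 1) * ‖iteratedFDeriv ℝ i ψ p‖ ≤ C) :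
    KNle ψ C := by
  intro i j hij p
  have hderiv : |(pd (1, 0))^[i] ((pd (0, 1))^[j] ψ) p| ≤ ‖iteratedFDeriv ℝ (i + j) ψ p‖ := by
    have h₁ := norm_iteratedFDeriv_iterate_pd_le (contDiff_iterate_pd hψ (0, 1) j) (1, 0) 0 i p
    have h₂ := norm_iteratedFDeriv_iterate_pd_le hψ (0, 1) i j p
    simp only [norm_iteratedFDeriv_zero, Prod.norm_mk, norm_one, norm_zero, sup_of_le_left,
      sup_of_le_right, zero_le_one, one_pow, one_mul] at h₁ h₂
    rw [zero_add] at h₁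
    exact h₁.trans h₂
  rw [abs_mul, abs_of_nonneg (by positivity)]
  refine le_trans ?_ (hC (i + j) hij p)
  rw [Nat.cast_add]
  gcongr

end Symbols

section EuclideanPlane

lemma enorm2_eq_norm_toLp (p : ℝ × ℝ) : enorm2 p = ‖WithLp.toLp 2 p‖ := by
  simp [enorm2, WithLp.prod_norm_eq_of_L2]

lemma enorm2_sub_comm (p q : ℝ × ℝ) : enorm2 (p - q) = enorm2 (q - p) := by
  simp only [enorm2_eq_norm_toLp, WithLp.toLp_sub, norm_sub_rev]

lemma enorm2_add_le (p q : ℝ × ℝ) : enorm2 (p + q) ≤ enorm2 p + enorm2 q := by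
  simpa only [enorm2_eq_norm_toLp, WithLp.toLp_add] using
    norm_add_le (WithLp.toLp 2 p) (WithLp.toLp 2 q)

lemma enorm2_sub_le (p q s : ℝ × ℝ) : enorm2 (p - s) ≤ enorm2 (p - q) + enorm2 (q - s) := by
  simpa using enorm2_add_le (p - q) (q - s)

lemma norm_le_enorm2 (p : ℝ × ℝ) : ‖p‖ ≤ enorm2 p := by
  rw [Prod.norm_def, enorm2]
  exact max_le (abs_le_sqrt (le_add_of_nonneg_right (sq_nonneg _)))
    (abs_le_sqrt (le_add_of_nonneg_left (sq_nonneg _)))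

lemma enorm2_le_two_mul_norm (p : ℝ × ℝ) : enorm2 p ≤ 2 * ‖p‖ := by
  have h₁ : p.1 ^ 2 ≤ ‖p‖ ^ 2 := sq_le_sq.2 (by simpa using norm_fst_le p)
  have h₂ : p.2 ^ 2 ≤ ‖p‖ ^ 2 := sq_le_sq.2 (by simpa using norm_snd_le p)
  exact sqrt_le_iff.2 ⟨by positivity, by nlinarith⟩

lemma mem_eball2 {c p : ℝ × ℝ} {r : ℝ} : p ∈ eball2 c r ↔ enorm2 (p - c) < r :=
  Iff.rfl

lemma isClosed_annulus (k : ℕ) : IsClosed (annulus k) := by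
  have hc : Continuous fun p : ℝ × ℝ => √(p.1 ^ 2 + p.2 ^ 2) := by fun_prop
  exact (isClosed_le continuous_const hc).inter (isClosed_le hc continuous_const)

lemma isCompact_annulus (k : ℕ) : IsCompact (annulus k) :=
  (isCompact_closedBall (0 : ℝ × ℝ) (2 ^ (k + 1))).of_isClosed_subset (isClosed_annulus k)
    fun p hp => mem_closedBall_zero_iff.2 ((norm_le_enorm2 p).trans hp.2)

lemma mem_annulus_iff {k : ℕ} {p : ℝ × ℝ} :
    p ∈ annulus k ↔ enorm2 p ∈ Icc ((2 : ℝ) ^ k / 2) (2 * 2 ^ k) := by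
  rw [← pow_succ', annulus, mem_ofPred_eq, zpow_sub_one₀ two_ne_zero, zpow_natCast,
    ← div_eq_mul_inv]
  rfl

lemma sqrt_one_add_mem_Icc_of_mem_annulus {k : ℕ} {p : ℝ × ℝ} (hp : p ∈ annulus k) :
    √(1 + p.1 ^ 2 + p.2 ^ 2) ∈ Icc ((2 : ℝ) ^ k / 2) (4 * 2 ^ k) := by
  obtain ⟨hp₁, hp₂⟩ := mem_annulus_iff.1 hp
  have hk : (1 : ℝ) ≤ 2 ^ k := one_le_pow₀ one_le_two
  constructor
  · exact hp₁.trans (sqrt_le_sqrt (by linarith))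
  · have hsq : enorm2 p ^ 2 = p.1 ^ 2 + p.2 ^ 2 := sq_sqrt (by positivity)
    have hle : enorm2 p ^ 2 ≤ (2 * 2 ^ k) ^ 2 := pow_le_pow_left₀ (sqrt_nonneg _) hp₂ 2
    exact sqrt_le_iff.2 ⟨by positivity, by nlinarith⟩

end EuclideanPlane

section RadialLines

/-- The point at signed distance `t` from the origin on the line through the origin in the
direction `θ`. -/
def radialLine (θ t : ℝ) : ℝ × ℝ := (t * cos θ, t * sin θ)

lemma radialLine_sub (θ s t : ℝ) : radialLine θ s - radialLine θ t = radialLine θ (s - t) := by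
  simp [radialLine, sub_mul]

lemma enorm2_radialLine (θ t : ℝ) : enorm2 (radialLine θ t) = |t| := by
  rw [enorm2, radialLine, ← sqrt_sq_eq_abs]
  congr 1
  linear_combination t ^ 2 * cos_sq_add_sin_sq θ

lemma segment_radialLine (θ a b : ℝ) :
    segment ℝ (radialLine θ a) (radialLine θ b) = radialLine θ '' segment ℝ a b :=
  (image_segment ℝ (LinearMap.toSpanSingleton ℝ (ℝ × ℝ) (cos θ, sin θ)).toAffineMap a b).symm

lemma LinePorous2.exists_mem_segment_disjoint {ν ρ₀ ρ₁ : ℝ} {Y : Set (ℝ × ℝ)}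
    (hY : LinePorous2 ν ρ₀ ρ₁ Y) {a b : ℝ × ℝ} (hab : enorm2 (a - b) ∈ Icc ρ₀ ρ₁) :
    ∃ x ∈ segment ℝ a b, Disjoint Y (eball2 x (ν * enorm2 (a - b))) := by
  obtain ⟨x, hx, hxY⟩ := hY a b hab
  exact ⟨x, hx, disjoint_iff_inter_eq_empty.2 hxY⟩

/-- `Y ⊆ ℝ²` is `ν`-porous on radial lines on scales `ρ₀` to `ρ₁`: porosity on lines, required only
of the segments lying on lines through the origin. -/
def RadiallyPorous (ν ρ₀ ρ₁ : ℝ) (Y : Set (ℝ × ℝ)) : Prop :=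
  ∀ θ a, ∀ R ∈ Icc ρ₀ ρ₁, ∃ t ∈ Icc a (a + R), Disjoint Y (eball2 (radialLine θ t) (ν * R))

lemma LinePorous2.radiallyPorous {ν ρ₀ ρ₁ : ℝ} {Y : Set (ℝ × ℝ)} (hY : LinePorous2 ν ρ₀ ρ₁ Y)
    (hρ₀ : 0 ≤ ρ₀) : RadiallyPorous ν ρ₀ ρ₁ Y := by
  intro θ a R hR
  have hR0 : 0 ≤ R := hρ₀.trans hR.1
  have hlen : enorm2 (radialLine θ a - radialLine θ (a + R)) = R := by
    rw [radialLine_sub, enorm2_radialLine, sub_add_cancel_left, abs_neg, abs_of_nonneg hR0]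
  obtain ⟨x, hx, hxY⟩ := hY.exists_mem_segment_disjoint (hlen.symm ▸ hR)
  rw [segment_radialLine, segment_eq_Icc (by linarith)] at hx
  obtain ⟨t, ht, rfl⟩ := hx
  exact ⟨t, ht, hlen ▸ hxY⟩

lemma RadiallyPorous.isPorous {ν ρ₀ ρ₁ ρ r : ℝ} {Y : Set (ℝ × ℝ)}
    (hY : RadiallyPorous ν ρ₀ ρ₁ Y) (hρ : ρ₀ ≤ ρ) (hν : 0 ≤ ν) (hr : 2 * r ≤ ν * ρ) (θ : ℝ) :
    IsPorous (ν / 2) ρ ρ₁ {t | ∃ y ∈ Y, enorm2 (radialLine θ t - y) < r} := by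
  intro a R hR
  obtain ⟨x, hx, hxY⟩ := hY θ a R ⟨hρ.trans hR.1, hR.2⟩
  refine ⟨x, hx, disjoint_left.2 ?_⟩
  rintro t ⟨y, hyY, hty⟩ htx
  refine disjoint_left.1 hxY hyY (mem_eball2.2 ?_)
  have hνR : ν * ρ ≤ ν * R := mul_le_mul_of_nonneg_left hR.1 hν
  calc enorm2 (y - radialLine θ x)
      ≤ enorm2 (y - radialLine θ t) + enorm2 (radialLine θ t - radialLine θ x) :=
        enorm2_sub_le _ _ _
    _ < r + ν / 2 * R := by
        rw [enorm2_sub_comm, radialLine_sub, enorm2_radialLine]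
        exact add_lt_add hty htx
    _ ≤ ν * R := by linarith

end RadialLines

section XRay

lemma xray_zero_eq_integral_radialLine (ψ : ℝ × ℝ → ℝ) (θ : ℝ) :
    xray ψ 0 θ = ∫ t, ψ (radialLine θ t) := by
  simp [xray, radialLine]

lemma abs_xray_zero_le {ψ : ℝ × ℝ → ℝ} {θ B V : ℝ} (hψ : ∀ p, |ψ p| ≤ B) (hV : 0 ≤ V)
    (hvol : volume {t | ψ (radialLine θ t) ≠ 0} ≤ ENNReal.ofReal V) :
    |xray ψ 0 θ| ≤ B * V := by
  rw [xray_zero_eq_integral_radialLine, ← setIntegral_eq_integral_of_forall_compl_eq_zero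
    (s := {t | ψ (radialLine θ t) ≠ 0}) fun t ht => not_not.1 ht]
  refine (norm_setIntegral_le_of_norm_le_const (hvol.trans_lt ENNReal.ofReal_lt_top)
    fun t _ => (Real.norm_eq_abs _).trans_le (hψ (radialLine θ t))).trans ?_
  exact mul_le_mul_of_nonneg_left (ENNReal.toReal_le_of_le_ofReal hV hvol)
    ((abs_nonneg _).trans (hψ 0))

variable {ψ : ℝ × ℝ → ℝ} {k : ℕ} {B : ℝ}

lemma abs_invSq_le (hψ : ∀ p, |ψ p| ≤ B) (hsupp : support ψ ⊆ annulus k) (p : ℝ × ℝ) :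
    |invSq ψ p| ≤ 4 / (2 ^ k) ^ 2 * B := by
  have hB : 0 ≤ B := (abs_nonneg _).trans (hψ 0)
  by_cases hp : ψ p = 0
  · rw [invSq, hp, mul_zero, abs_zero]
    positivity
  · have hsq : (2 ^ k / 2) ^ 2 ≤ enorm2 p ^ 2 :=
      pow_le_pow_left₀ (by positivity) (mem_annulus_iff.1 (hsupp hp)).1 2
    rw [enorm2, sq_sqrt (by positivity)] at hsq
    rw [invSq, abs_mul, abs_of_nonneg (by positivity)]
    refine mul_le_mul ?_ (hψ p) (abs_nonneg _) (by positivity)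
    calc (p.1 ^ 2 + p.2 ^ 2)⁻¹ ≤ ((2 ^ k / 2) ^ 2)⁻¹ := inv_anti₀ (by positivity) hsq
      _ = 4 / (2 ^ k) ^ 2 := by rw [div_pow, inv_div]; norm_num

lemma qOf_le {V : ℝ} (hψ : ∀ p, |ψ p| ≤ B) (hsupp : support ψ ⊆ annulus k) (hV : 0 ≤ V)
    (hvol : ∀ θ, volume {t | ψ (radialLine θ t) ≠ 0} ≤ ENNReal.ofReal V) :
    qOf ψ ≤ 4 / (2 ^ k) ^ 2 * B * V := by
  refine neg_le.2 (le_ciInf fun θ => (abs_le.1 ?_).1)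
  refine abs_xray_zero_le (abs_invSq_le hψ hsupp) hV ((measure_mono fun t ht => ?_).trans (hvol θ))
  exact right_ne_zero_of_mul ht

lemma qOf_zero : qOf 0 = 0 := by
  simp [qOf, xray, invSq]

end XRay

section DyadicShell

/-- The shell `{3/4 * 2 ^ k ≤ |x| ≤ 3/2 * 2 ^ k}`. These shells cover the plane away from the
origin, and each of them lies well inside `annulus k`. -/
def dyadicShell (k : ℕ) : Set (ℝ × ℝ) :=
  {p | enorm2 p ∈ Icc (3 / 4 * 2 ^ k : ℝ) (3 / 2 * 2 ^ k)}

lemma exists_mem_dyadicShell_succ {p : ℝ × ℝ} (hp : 3 / 2 ≤ enorm2 p) :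
    ∃ n, p ∈ dyadicShell (n + 1) := by
  obtain ⟨n, hn, hn'⟩ := exists_nat_pow_near (x := 2 / 3 * enorm2 p) (by linarith)
    (one_lt_two : (1 : ℝ) < 2)
  refine ⟨n, ?_, by linarith⟩
  rw [pow_succ]
  linarith

lemma mem_annulus_of_mem_dyadicShell {k : ℕ} {p y : ℝ × ℝ} (hy : y ∈ dyadicShell k)
    (hpy : enorm2 (p - y) ≤ 2 ^ k / 4) : p ∈ annulus k := by
  have hp := enorm2_add_le (p - y) y
  have hy' := enorm2_add_le (y - p) p
  rw [sub_add_cancel] at hp hy'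
  rw [enorm2_sub_comm] at hy'
  exact mem_annulus_iff.2 ⟨by linarith [hy.1], by linarith [hy.2]⟩

lemma lt_of_mem_dyadicShell {k : ℕ} {H : ℝ} {Y : Set (ℝ × ℝ)} (hY : Y ⊆ eball2 0 H)
    {y : ℝ × ℝ} (hy : y ∈ Y ∩ dyadicShell k) : 3 / 4 * 2 ^ k < H := by
  have hyH : enorm2 y < H := by simpa using mem_eball2.1 (hY hy.1)
  exact hy.2.1.trans_lt hyH

lemma div_log_rpow_le {α x : ℝ} (hα₀ : 0 ≤ α) (hα₁ : α ≤ 1) {k : ℕ} (hk : 1 ≤ k)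
    (hx : x ∈ Icc (3 / 4 * 2 ^ k : ℝ) (3 / 2 * 2 ^ k)) :
    x / log x ^ α ≤ 6 * 2 ^ k * (k : ℝ) ^ (-α) := by
  have hk' : (1 : ℝ) ≤ k := by exact_mod_cast hk
  have hlog : (k / 4 : ℝ) ≤ log x :=
    calc (k / 4 : ℝ) ≤ 1 - (3 / 4)⁻¹ + k * log 2 := by nlinarith [log_two_gt_d9]
      _ ≤ log (3 / 4) + log (2 ^ k) := by
        rw [log_pow]
        gcongr
        exact one_sub_inv_le_log_of_pos (by norm_num)
      _ = log (3 / 4 * 2 ^ k) := (log_mul (by norm_num) (by positivity)).symm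
      _ ≤ log x := log_le_log (by positivity) hx.1
  have hpow : (k : ℝ) ^ α / 4 ≤ log x ^ α :=
    calc (k : ℝ) ^ α / 4 ≤ (k : ℝ) ^ α / 4 ^ α := by
          gcongr
          exact rpow_le_self_of_one_le (by norm_num) hα₁
      _ = (k / 4 : ℝ) ^ α := (div_rpow (by positivity) (by norm_num) α).symm
      _ ≤ log x ^ α := by gcongr
  calc x / log x ^ α ≤ 3 / 2 * 2 ^ k / ((k : ℝ) ^ α / 4) := by gcongr; exact hx.2
    _ = 6 * 2 ^ k * (k : ℝ) ^ (-α) := by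
      rw [rpow_neg (by positivity)]
      field_simp
      norm_num

end DyadicShell

section DyadicPiece

/-- `ψ` is a piece at scale `2 ^ k`, of relative width `κ`, of a weight adapted to `Y`: a symbol
supported in `annulus k` which is negative of size `2 ^ k * κ ^ 3` on the part of `Y` in
`dyadicShell k`, and whose growth `qOf ψ` beats `κ ^ 3` by the factor `κ ^ γ`. -/
structure IsDyadicPiece (C D γ : ℝ) (Y : Set (ℝ × ℝ)) (k : ℕ) (κ : ℝ) (ψ : ℝ × ℝ → ℝ) :
    Prop where
  contDiff : ContDiff ℝ (⊤ : ℕ∞) ψ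
  nonpos : ∀ p, ψ p ≤ 0
  tsupport_subset : tsupport ψ ⊆ annulus k
  kNle : KNle ψ C
  qOf_le : qOf ψ ≤ D * κ ^ (3 + γ)
  eq_of_mem : ∀ p ∈ Y ∩ dyadicShell k, ψ p = -(6 * 2 ^ k * κ ^ 3)
  eq_zero : Y ∩ dyadicShell k = ∅ → ψ = 0

lemma IsDyadicPiece.hasCompactSupport {C D γ κ : ℝ} {Y : Set (ℝ × ℝ)} {k : ℕ} {ψ : ℝ × ℝ → ℝ}
    (hψ : IsDyadicPiece C D γ Y k κ ψ) : HasCompactSupport ψ :=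
  (isCompact_annulus k).of_isClosed_subset (isClosed_tsupport ψ) hψ.tsupport_subset

-- The symbol bound for a bump of height `K κ ^ m` and width `K κ / 8` at distance `∼ K` from `0`.
lemma zpow_mul_pow_mul_inv_pow_le {K W κ : ℝ} (hK : 0 < K) (hW : W ∈ Icc (K / 2) (4 * K))
    (hκ₀ : 0 < κ) (hκ₁ : κ ≤ 1) {i m : ℕ} (him : i ≤ m) :
    W ^ ((i : ℤ) - 1) * (K * κ ^ m * (K * κ / 8)⁻¹ ^ i) ≤ 2 * 32 ^ i := by
  have hW₀ : 0 < W := (half_pos hK).trans_le hW.1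
  have hKW : K / W ≤ 2 := (div_le_iff₀ hW₀).2 (by linarith [hW.1])
  have hWK : 8 * (W / K) ≤ 32 := by linarith [(div_le_iff₀ hK).2 hW.2]
  obtain ⟨n, rfl⟩ := Nat.exists_eq_add_of_le him
  calc W ^ ((i : ℤ) - 1) * (K * κ ^ (i + n) * (K * κ / 8)⁻¹ ^ i)
      = K / W * (8 * (W / K)) ^ i * κ ^ n := by
        rw [zpow_sub_one₀ hW₀.ne', zpow_natCast, pow_add, inv_div, div_pow, mul_pow, mul_pow,
          div_pow]
        field_simp
    _ ≤ 2 * 32 ^ i * 1 := by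
        gcongr
        exact pow_le_one₀ hκ₀.le hκ₁
    _ = 2 * 32 ^ i := mul_one _

variable {C : ℕ → ℝ} {Y : Set (ℝ × ℝ)} {k : ℕ} {κ : ℝ} {η : ℝ × ℝ → ℝ}

lemma IsSmoothCutoff.exists_enorm2_sub_lt
    (hη : IsSmoothCutoff C (Y ∩ dyadicShell k) (2 ^ k * κ / 8) η) {p : ℝ × ℝ} (hp : η p ≠ 0) :
    ∃ y ∈ Y ∩ dyadicShell k, enorm2 (p - y) < 2 ^ k * κ / 4 := by
  obtain ⟨y, hy, hpy⟩ := mem_thickening_iff.1 (hη.support_subset hp)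
  rw [dist_eq_norm] at hpy
  exact ⟨y, hy, by linarith [enorm2_le_two_mul_norm (p - y)]⟩

lemma IsSmoothCutoff.support_subset_annulus
    (hη : IsSmoothCutoff C (Y ∩ dyadicShell k) (2 ^ k * κ / 8) η) (hκ₁ : κ ≤ 1) :
    support η ⊆ annulus k := by
  intro p hp
  obtain ⟨y, hy, hpy⟩ := hη.exists_enorm2_sub_lt hp
  have hκ : (2 : ℝ) ^ k * κ / 4 ≤ 2 ^ k / 4 := by
    gcongr
    exact mul_le_of_le_one_right (by positivity) hκ₁
  exact mem_annulus_of_mem_dyadicShell hy.2 (hpy.le.trans hκ)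

lemma IsSmoothCutoff.kNle_neg_smul
    (hη : IsSmoothCutoff C (Y ∩ dyadicShell k) (2 ^ k * κ / 8) η) (hC : ∀ i, 0 ≤ C i)
    (hκ₀ : 0 < κ) (hκ₁ : κ ≤ 1) :
    KNle (-(6 * 2 ^ k * κ ^ 3) • η) (∑ i ∈ Finset.range 4, 6 * C i * (2 * 32 ^ i)) := by
  refine kNle_of_norm_iteratedFDeriv_le (contDiff_const.smul hη.contDiff) fun i hi p => ?_
  have hηi : ContDiff ℝ i η := hη.contDiff.of_le (by exact_mod_cast le_top)
  have hterm (j : ℕ) : 0 ≤ 6 * C j * (2 * 32 ^ j) :=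
    mul_nonneg (by linarith [hC j]) (by positivity)
  refine le_trans ?_ (Finset.single_le_sum (fun j _ => hterm j)
    (Finset.mem_range.2 (Nat.lt_succ_of_le hi)))
  rw [iteratedFDeriv_const_smul_apply hηi.contDiffAt, norm_smul, norm_neg,
    Real.norm_of_nonneg (by positivity)]
  by_cases hp : p ∈ annulus k
  · set W := √(1 + p.1 ^ 2 + p.2 ^ 2)
    calc W ^ ((i : ℤ) - 1) * (6 * 2 ^ k * κ ^ 3 * ‖iteratedFDeriv ℝ i η p‖)
        ≤ W ^ ((i : ℤ) - 1) * (6 * 2 ^ k * κ ^ 3 * (C i * (2 ^ k * κ / 8)⁻¹ ^ i)) := by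
          gcongr
          exact hη.norm_iteratedFDeriv_le i p
      _ = 6 * C i * (W ^ ((i : ℤ) - 1) * (2 ^ k * κ ^ 3 * (2 ^ k * κ / 8)⁻¹ ^ i)) := by ring
      _ ≤ 6 * C i * (2 * 32 ^ i) := by
          refine mul_le_mul_of_nonneg_left ?_ (by linarith [hC i])
          exact zpow_mul_pow_mul_inv_pow_le (by positivity)
            (sqrt_one_add_mem_Icc_of_mem_annulus hp) hκ₀ hκ₁ hi
  · have hzero : iteratedFDeriv ℝ i η p = 0 := by
      refine notMem_support.1 fun h => hp ?_
      exact closure_minimal (hη.support_subset_annulus hκ₁) (isClosed_annulus k)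
        (support_iteratedFDeriv_subset i h)
    simpa [hzero] using hterm i

lemma exists_volume_radialLine_le {ν : ℝ} (hν : 0 < ν) :
    ∃ γ > (0 : ℝ), ∃ D ≥ (0 : ℝ), ∀ {H K κ : ℝ} {Y : Set (ℝ × ℝ)}, RadiallyPorous ν 1 H Y →
      0 < K → K / 2 ≤ H → 0 < κ → 1 ≤ K * κ → ∀ θ,
      volume ({t | ∃ y ∈ Y, enorm2 (radialLine θ t - y) < K * κ / 4} ∩ Icc (-(2 * K)) (2 * K)) ≤
        ENNReal.ofReal (D * κ ^ γ * K) := by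
  obtain ⟨γ, hγ, D, hD, hvol⟩ := exists_volume_inter_Icc_le_rpow_of_isPorous (half_pos hν)
  set c := max 1 (1 / (2 * ν))
  have hc : 1 / 2 ≤ ν * c := by
    calc 1 / 2 = ν * (1 / (2 * ν)) := by field_simp
      _ ≤ ν * c := by gcongr; exact le_max_right _ _
  have hc₁ : 1 ≤ c := le_max_left _ _
  refine ⟨γ, hγ, 4 * D * (2 * c) ^ γ, by positivity, fun {H K κ Y} hY hK hKH hκ hKκ θ => ?_⟩
  have hporous := hY.isPorous (ρ := K * κ * c) (r := K * κ / 4) (by nlinarith) hν.le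
    (by nlinarith) θ
  have hpiece := volume_inter_Icc_le_mul (hvol hporous (by positivity) (half_pos hK) hKH)
    (-(2 * K)) 7
  have hR : K * κ * c / (K / 2) = 2 * c * κ := by field_simp
  rw [hR, mul_rpow (by positivity) hκ.le] at hpiece
  have hI : -(2 * K) + ((7 : ℕ) + 1) * (K / 2) = 2 * K := by push_cast; ring
  rw [hI] at hpiece
  refine hpiece.trans_eq ?_
  rw [show ((7 : ℕ) + 1 : ENNReal) = ENNReal.ofReal 8 by norm_num,
    ← ENNReal.ofReal_mul (by norm_num)]
  congr 1
  ring

lemma IsSmoothCutoff.qOf_neg_smul_le {γ D : ℝ}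
    (hη : IsSmoothCutoff C (Y ∩ dyadicShell k) (2 ^ k * κ / 8) η) (hD : 0 ≤ D) (hκ₀ : 0 < κ)
    (hκ₁ : κ ≤ 1) (hvol : (Y ∩ dyadicShell k).Nonempty → ∀ θ,
      volume ({t | ∃ y ∈ Y, enorm2 (radialLine θ t - y) < 2 ^ k * κ / 4} ∩
        Icc (-(2 * 2 ^ k)) (2 * 2 ^ k)) ≤ ENNReal.ofReal (D * κ ^ γ * 2 ^ k)) :
    qOf (-(6 * 2 ^ k * κ ^ 3) • η) ≤ 24 * D * κ ^ (3 + γ) := by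
  have hsupp : support (-(6 * 2 ^ k * κ ^ 3) • η) ⊆ support η := support_const_smul_subset _ _
  have hψ (p : ℝ × ℝ) : |(-(6 * 2 ^ k * κ ^ 3) • η) p| ≤ 6 * 2 ^ k * κ ^ 3 := by
    rw [Pi.smul_apply, smul_eq_mul, abs_mul, abs_neg, abs_of_nonneg (hη.nonneg p),
      abs_of_nonneg (by positivity)]
    exact mul_le_of_le_one_right (by positivity) (hη.le_one p)
  refine (qOf_le hψ (hsupp.trans (hη.support_subset_annulus hκ₁))
    (V := D * κ ^ γ * 2 ^ k) (by positivity) fun θ => ?_).trans_eq ?_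
  · rcases (Y ∩ dyadicShell k).eq_empty_or_nonempty with hempty | hne
    · simp [(hempty ▸ hη).eq_zero]
    · refine (measure_mono fun t ht => ?_).trans (hvol hne θ)
      obtain ⟨y, hy, hty⟩ := hη.exists_enorm2_sub_lt (hsupp ht)
      have hmem := (mem_annulus_iff.1 (hη.support_subset_annulus hκ₁ (hsupp ht))).2
      rw [enorm2_radialLine] at hmem
      exact ⟨⟨y, hy.1, hty⟩, abs_le.1 hmem⟩
  · rw [rpow_add hκ₀, ← Nat.cast_ofNat (R := ℝ) (n := 3), rpow_natCast]
    field_simp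
    ring

lemma exists_isDyadicPiece {ν : ℝ} (hν : 0 < ν) :
    ∃ γ > (0 : ℝ), ∃ C ≥ (0 : ℝ), ∃ D ≥ (0 : ℝ), ∀ {H κ : ℝ} {Y : Set (ℝ × ℝ)} {k : ℕ},
      Y ⊆ eball2 0 H → RadiallyPorous ν 1 H Y → 0 < κ → κ ≤ 1 → 1 ≤ 2 ^ k * κ →
      ∃ ψ, IsDyadicPiece C D γ Y k κ ψ := by
  obtain ⟨γ, hγ, D, hD, hvol⟩ := exists_volume_radialLine_le hν
  obtain ⟨C, hC, hcut⟩ := exists_isSmoothCutoff (ℝ × ℝ)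
  refine ⟨γ, hγ, ∑ i ∈ Finset.range 4, 6 * C i * (2 * 32 ^ i),
    Finset.sum_nonneg fun i _ => mul_nonneg (by linarith [hC i]) (by positivity), 24 * D,
    by positivity, fun {H κ Y k} hYH hY hκ₀ hκ₁ hκk => ?_⟩
  obtain ⟨η, hη⟩ := hcut (Y ∩ dyadicShell k) (2 ^ k * κ / 8) (by positivity)
  refine ⟨-(6 * 2 ^ k * κ ^ 3) • η, ?_, fun p => ?_, ?_, hη.kNle_neg_smul hC hκ₀ hκ₁,
    hη.qOf_neg_smul_le hD hκ₀ hκ₁ fun ⟨y, hy⟩ => ?_, fun p hp => ?_, fun hempty => ?_⟩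
  · exact contDiff_const.smul hη.contDiff
  · exact mul_nonpos_of_nonpos_of_nonneg (neg_nonpos.2 (by positivity)) (hη.nonneg p)
  · exact closure_minimal ((support_const_smul_subset _ _).trans (hη.support_subset_annulus hκ₁))
      (isClosed_annulus k)
  · have hk : (0 : ℝ) < 2 ^ k := by positivity
    exact hvol hY hk (by linarith [lt_of_mem_dyadicShell hYH hy]) hκ₀ hκk
  · simp [hη.eq_one p hp]
  · simp [(hempty ▸ hη).eq_zero]

end DyadicPiece

section Summation

lemma one_le_two_pow_mul_rpow_neg {k : ℕ} (hk : 1 ≤ k) {β : ℝ} (hβ : β ≤ 1) :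
    (1 : ℝ) ≤ 2 ^ k * (k : ℝ) ^ (-β) := by
  have hk₁ : (1 : ℝ) ≤ k := by exact_mod_cast hk
  have hk₂ : (k : ℝ) ≤ 2 ^ k := by exact_mod_cast Nat.lt_two_pow_self.le
  rw [rpow_neg (by positivity), ← div_eq_mul_inv, one_le_div (by positivity)]
  exact (rpow_le_self_of_one_le hk₁ hβ).trans hk₂

lemma summable_of_forall_ge_eq_zero {M : Type*} [AddCommMonoid M] [TopologicalSpace M] {f : ℕ → M}
    (hf : ∃ N, ∀ k, N ≤ k → f k = 0) : Summable f := by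
  obtain ⟨N, hN⟩ := hf
  exact summable_of_ne_finset_zero (s := Finset.range N) fun k hk => hN k (by simpa using hk)

lemma tsum_le_of_nonpos {ι M : Type*} [AddCommGroup M] [PartialOrder M] [IsOrderedAddMonoid M]
    [TopologicalSpace M] [IsTopologicalAddGroup M] [OrderClosedTopology M] {f : ι → M}
    (hf : Summable f) (hf₀ : ∀ i, f i ≤ 0) (i : ι) : ∑' j, f j ≤ f i := by
  have hle := hf.neg.le_tsum i fun j _ => neg_nonneg.2 (hf₀ j)
  rw [tsum_neg] at hle
  exact neg_le_neg_iff.1 hle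

variable {C D γ α H : ℝ} {Y : Set (ℝ × ℝ)} {ω : ℕ → ℝ × ℝ → ℝ}

lemma exists_forall_ge_eq_zero {κ : ℕ → ℝ} (hY : Y ⊆ eball2 0 H)
    (hω : ∀ k, 1 ≤ k → IsDyadicPiece C D γ Y k (κ k) (ω k)) :
    ∃ N, ∀ k, N ≤ k → ω k = 0 := by
  obtain ⟨N, hN⟩ := pow_unbounded_of_one_lt (2 * H) (one_lt_two : (1 : ℝ) < 2)
  refine ⟨N + 1, fun k hk => (hω k (by omega)).eq_zero (eq_empty_of_forall_notMem fun y hy => ?_)⟩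
  have hNk : (2 : ℝ) ^ N ≤ 2 ^ k := pow_le_pow_right₀ one_le_two (by omega)
  have hk₀ : (0 : ℝ) < 2 ^ k := by positivity
  linarith [lt_of_mem_dyadicShell hY hy]

lemma tsum_qOf_le {β : ℝ} (hβ : 1 < β * (3 + γ))
    (hω : ∀ k, 1 ≤ k → IsDyadicPiece C D γ Y k ((k : ℝ) ^ (-β)) (ω k))
    (hzero : ∃ N, ∀ k, N ≤ k → ω k = 0) :
    ∑' k, qOf (ω (k + 1)) ≤ ∑' k : ℕ, D * ((k + 1 : ℕ) : ℝ) ^ (-(β * (3 + γ))) := by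
  obtain ⟨N, hN⟩ := hzero
  have hq : Summable fun k => qOf (ω (k + 1)) :=
    summable_of_forall_ge_eq_zero ⟨N, fun k hk => by rw [hN _ (by omega), qOf_zero]⟩
  have hbound : Summable fun k : ℕ => D * ((k + 1 : ℕ) : ℝ) ^ (-(β * (3 + γ))) :=
    ((summable_nat_add_iff 1).2 (summable_nat_rpow.2 (by linarith))).mul_left D
  refine hq.tsum_le_tsum (fun k => (hω (k + 1) (by omega)).qOf_le.trans_eq ?_) hbound
  rw [← rpow_mul (by positivity), neg_mul]

lemma tsum_apply_le_neg_div_log_rpow (hα : α ∈ Icc (0 : ℝ) 1)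
    (hω : ∀ k, 1 ≤ k → IsDyadicPiece C D γ Y k ((k : ℝ) ^ (-(α / 3))) (ω k))
    (hzero : ∃ N, ∀ k, N ≤ k → ω k = 0) {p : ℝ × ℝ} (hpY : p ∈ Y) (hp : 3 / 2 ≤ enorm2 p) :
    ∑' k, ω (k + 1) p ≤ -(enorm2 p / log (enorm2 p) ^ α) := by
  obtain ⟨N, hN⟩ := hzero
  have hsum : Summable fun k => ω (k + 1) p :=
    summable_of_forall_ge_eq_zero ⟨N, fun k hk => by rw [hN _ (by omega), Pi.zero_apply]⟩
  obtain ⟨n, hn⟩ := exists_mem_dyadicShell_succ hp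
  have hpow : (((n + 1 : ℕ) : ℝ) ^ (-(α / 3))) ^ 3 = ((n + 1 : ℕ) : ℝ) ^ (-α) := by
    rw [← rpow_mul_natCast (by positivity)]
    congr 1
    push_cast
    ring
  calc ∑' k, ω (k + 1) p
      ≤ ω (n + 1) p := tsum_le_of_nonpos hsum (fun k => (hω (k + 1) (by omega)).nonpos p) n
    _ = -(6 * 2 ^ (n + 1) * ((n + 1 : ℕ) : ℝ) ^ (-α)) := by
        rw [(hω (n + 1) (by omega)).eq_of_mem p ⟨hpY, hn⟩, hpow]
    _ ≤ -(enorm2 p / log (enorm2 p) ^ α) :=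
        neg_le_neg (div_log_rpow_le hα.1 hα.2 (by omega) hn)

end Summation

theorem existence_weight_general {ν : ℝ} (hν : 0 < ν) :
    ∃ Creg : ℝ, 0 ≤ Creg ∧ ∃ Cgr : ℝ, 0 ≤ Cgr ∧ ∃ α ∈ Ioo (0 : ℝ) 1,
    ∀ (H : ℝ) (Y : Set (ℝ × ℝ)), Y ⊆ eball2 (0, 0) H → RadiallyPorous ν 1 H Y →
    ∃ ω : ℕ → ℝ × ℝ → ℝ,
      (∀ k, 1 ≤ k → ContDiff ℝ (⊤ : ℕ∞) (ω k)) ∧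
      (∀ k, 1 ≤ k → HasCompactSupport (ω k)) ∧
      (∀ k, 1 ≤ k → ∀ p, ω k p ≤ 0) ∧
      (∃ N, ∀ k, N ≤ k → ω k = 0) ∧
      (∀ k, 1 ≤ k → tsupport (ω k) ⊆ annulus k) ∧
      (∀ k, 1 ≤ k → KNle (ω k) Creg) ∧
      (∑' k : ℕ, qOf (ω (k + 1))) ≤ Cgr ∧
      (∀ p ∈ Y, 10 < enorm2 p →
        (∑' k : ℕ, ω (k + 1) p) ≤ -(enorm2 p / log (enorm2 p) ^ α)) := by
  obtain ⟨γ, hγ, C, hC, D, hD, hpiece⟩ := exists_isDyadicPiece hν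
  -- The gain of `κ ^ γ` over `κ ^ 3` in `qOf` makes the `qOf (ω k)` summable with `α < 1`.
  obtain ⟨α, hα₀, hα₁, hαγ⟩ : ∃ α : ℝ, 0 < α ∧ α < 1 ∧ 1 < α / 3 * (3 + γ) := by
    obtain ⟨α, hα, hα₁⟩ := exists_between (show 3 / (3 + γ) < 1 by
      rw [div_lt_one] <;> linarith)
    rw [div_lt_iff₀ (by positivity)] at hα
    exact ⟨α, by nlinarith, hα₁, by linarith⟩
  refine ⟨C, hC, ∑' k : ℕ, D * ((k + 1 : ℕ) : ℝ) ^ (-(α / 3 * (3 + γ))),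
    tsum_nonneg fun k => by positivity, α, ⟨hα₀, hα₁⟩, fun H Y hYH hY => ?_⟩
  choose! ω hω using fun (k : ℕ) (hk : 1 ≤ k) => hpiece (k := k) (κ := (k : ℝ) ^ (-(α / 3))) hYH hY
    (by positivity)
    (rpow_le_one_of_one_le_of_nonpos (by exact_mod_cast hk) (by linarith))
    (one_le_two_pow_mul_rpow_neg hk (by linarith))
  have hzero := exists_forall_ge_eq_zero hYH hω
  exact ⟨ω, fun k hk => (hω k hk).contDiff, fun k hk => (hω k hk).hasCompactSupport,
    fun k hk => (hω k hk).nonpos, hzero, fun k hk => (hω k hk).tsupport_subset,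
    fun k hk => (hω k hk).kNle, tsum_qOf_le hαγ hω hzero, fun p hp hp10 =>
      tsum_apply_le_neg_div_log_rpow ⟨hα₀.le, hα₁.le⟩ hω hzero hp (by linarith)⟩

end

/-- Existence of a dyadic weight `ω = Σ_{k≥1} ω_k` adapted to a line porous set. -/
theorem existence_weight (ν : ℝ) (hν : ν ∈ Set.Ioo 0 (1/10)) :
    ∃ Creg : ℝ, 0 ≤ Creg ∧ ∃ Cgr : ℝ, 0 ≤ Cgr ∧ ∃ α ∈ Set.Ioo (0:ℝ) 1,
    ∀ h : ℝ, h ∈ Set.Ioo 0 (1/100) →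
    ∀ Y : Set (ℝ × ℝ), Y ⊆ eball2 (0, 0) h⁻¹ → LinePorous2 ν 1 h⁻¹ Y →
    ∃ ω : ℕ → ℝ × ℝ → ℝ,
      (∀ k, 1 ≤ k → ContDiff ℝ (⊤ : ℕ∞) (ω k)) ∧
      (∀ k, 1 ≤ k → HasCompactSupport (ω k)) ∧
      (∀ k, 1 ≤ k → ∀ p, ω k p ≤ 0) ∧
      (∃ N, ∀ k, N ≤ k → ω k = 0) ∧
      (∀ k, 1 ≤ k → tsupport (ω k) ⊆ annulus k) ∧
      (∀ k, 1 ≤ k → KNle (ω k) Creg) ∧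
      (∑' k : ℕ, qOf (ω (k + 1))) ≤ Cgr ∧
      (∀ p ∈ Y, 10 < enorm2 p →
        (∑' k : ℕ, ω (k + 1) p) ≤ -(enorm2 p / Real.log (enorm2 p) ^ α)) := by
  obtain ⟨Creg, hCreg, Cgr, hCgr, α, hα, hω⟩ := existence_weight_general hν.1
  exact ⟨Creg, hCreg, Cgr, hCgr, α, hα, fun h _ Y hYh hY =>
    hω h⁻¹ Y hYh (hY.radiallyPorous zero_le_one)⟩

end
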